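/- arXiv:0705.0844 — 3 statements merged into one kernel-verified Lean document; each statement's English description precedes it below -/
import Mathlib

section
/- Every hyper-elementary subgroup of the group A_5 × ℤ/2 is isomorphic to a subgroup of one of the following three groups: the elementary abelian group (ℤ/2)³, the dihedral group D_6 of order 12, or the dihedral group D_{10} of order 20. -/
/-- A finite group is hyper-elementary if it has a cyclic normal subgroup `C` such that the
quotient by `C` is a `p`-group for some prime `p` not dividing the order of `C`. -/
def IsHyperElementary (G : Type*) [Group G] : Prop :=
  ∃ C : Subgroup G, ∃ hN : C.Normal, IsCyclic C ∧
    ∃ p : ℕ, p.Prime ∧ ¬ p ∣ Nat.card C ∧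
      @IsPGroup p (G ⧸ C) (@QuotientGroup.Quotient.group G _ C hN)

/-!
Let `K` be the projection of `H` to `A₅`. It is again hyper-elementary, so if it is nontrivial it
contains some `c ≠ 1` with `⟨c⟩` normal. All nontrivial elements of `A₅` have order `2`, `3` or `5`.
Commuting nontrivial elements have equal order, as their product would otherwise have composite
order. If `c` has order `2`, then `c` is central and so `K` has exponent `2`. If `c` has order
`p = 3` or `5`, then `⟨c⟩` is its own centralizer since `p² ∤ 60`, and an element outside `⟨c⟩`
acts faithfully on `⟨c⟩`, so its order is a prime divisor of `p - 1 ∈ {2, 4}`, that is `2`. Hence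
the elements of `K × ℤ/2` outside the cyclic subgroup `⟨c⟩ × ℤ/2` are involutions, which makes
`K × ℤ/2` a subgroup of `D_{2p}`.
-/

open Function Subgroup

variable {G G' : Type*} [Group G] [Group G']

namespace IsHyperElementary

theorem of_surjective (hG : IsHyperElementary G) (f : G →* G') (hf : Surjective f) :
    IsHyperElementary G' := by
  obtain ⟨C, hC, hcyc, p, hp, hpC, hquot⟩ := hG
  have hC' : (C.map f).Normal := hC.map f hf
  have hcyc' : IsCyclic (C.map f) :=
    isCyclic_of_surjective (f.subgroupMap C) (f.subgroupMap_surjective C)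
  refine ⟨C.map f, hC', hcyc', p, hp, fun h ↦ hpC (h.trans (C.card_map_dvd f)), ?_⟩
  exact hquot.of_surjective (QuotientGroup.map C (C.map f) f (le_comap_map f C))
    (QuotientGroup.map_surjective_of_surjective _ _ _
      ((QuotientGroup.mk'_surjective _).comp hf) _)

theorem exists_normal_zpowers [Finite G] [Nontrivial G] (hG : IsHyperElementary G) :
    ∃ c : G, c ≠ 1 ∧ (zpowers c).Normal := by
  obtain ⟨C, hC, hcyc, p, hp, -, hquot⟩ := hG
  rcases eq_or_ne C ⊥ with rfl | hbot
  · have : Fact p.Prime := ⟨hp⟩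
    have hpG : IsPGroup p G := hquot.of_equiv QuotientGroup.quotientBot
    have := hpG.center_nontrivial
    obtain ⟨c, hc⟩ := exists_ne (1 : center G)
    refine ⟨c, by simpa using hc, ⟨fun x hx g ↦ ?_⟩⟩
    have hxg := mem_center_iff.1 (zpowers_le.2 c.2 hx) g
    rwa [hxg, mul_inv_cancel_right]
  · obtain ⟨c, rfl⟩ := C.isCyclic_iff_exists_zpowers_eq_top.1 hcyc
    exact ⟨c, by simpa using hbot, hC⟩

end IsHyperElementary

section Dihedral

variable {c s : G}

theorem zpow_cast_intCast (k : ℤ) : c ^ ((k : ZMod (orderOf c)).cast : ℤ) = c ^ k := by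
  rw [ZMod.coe_intCast, zpow_mod_orderOf]

/-- The homomorphism from the dihedral group given by its presentation: the rotation `r 1` goes to
`c` and the reflection `sr 0` to an involution `s` inverting `c`. The exponent `i : ZMod n` is
represented by the integer `i.cast`, so that `n = 0`, the infinite dihedral group, is included. -/
noncomputable def dihedralHom (hs : s ^ 2 = 1) (hsc : SemiconjBy s c c⁻¹) :
    DihedralGroup (orderOf c) →* G :=
  MonoidHom.mk'
    (fun
      | .r i => c ^ (i.cast : ℤ)
      | .sr i => s * c ^ (i.cast : ℤ))
    (by
      have hswap (k : ℤ) : c ^ k * s = s * c ^ (-k) := by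
        simpa using (hsc.zpow_right (-k)).eq.symm
      rintro (i | i) (j | j) <;>
        obtain ⟨k, rfl⟩ := ZMod.intCast_surjective i <;>
        obtain ⟨l, rfl⟩ := ZMod.intCast_surjective j
      · simp only [DihedralGroup.r_mul_r, ← Int.cast_add, zpow_cast_intCast, zpow_add]
      · simp only [DihedralGroup.r_mul_sr, ← Int.cast_sub, zpow_cast_intCast]
        rw [← mul_assoc, hswap, mul_assoc, ← zpow_add, neg_add_eq_sub]
      · simp only [DihedralGroup.sr_mul_r, ← Int.cast_add, zpow_cast_intCast, zpow_add, mul_assoc]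
      · simp only [DihedralGroup.sr_mul_sr, ← Int.cast_sub, zpow_cast_intCast]
        rw [mul_assoc, ← mul_assoc (c ^ k), hswap, ← mul_assoc, ← mul_assoc, ← sq, hs, one_mul,
          ← zpow_add, neg_add_eq_sub])

theorem dihedralHom_r_intCast (hs : s ^ 2 = 1) (hsc : SemiconjBy s c c⁻¹) (k : ℤ) :
    dihedralHom hs hsc (.r k) = c ^ k :=
  zpow_cast_intCast k

theorem dihedralHom_sr_intCast (hs : s ^ 2 = 1) (hsc : SemiconjBy s c c⁻¹) (k : ℤ) :
    dihedralHom hs hsc (.sr k) = s * c ^ k :=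
  congrArg (s * ·) (dihedralHom_r_intCast hs hsc k)

theorem dihedralHom_injective (hs : s ^ 2 = 1) (hsc : SemiconjBy s c c⁻¹) (hsmem : s ∉ zpowers c) :
    Injective (dihedralHom hs hsc) := by
  rw [injective_iff_map_eq_one]
  rintro (i | i) hi <;> obtain ⟨k, rfl⟩ := ZMod.intCast_surjective i
  · rw [dihedralHom_r_intCast, ← orderOf_dvd_iff_zpow_eq_one,
      ← ZMod.intCast_zmod_eq_zero_iff_dvd] at hi
    rw [hi, DihedralGroup.r_zero]
  · rw [dihedralHom_sr_intCast] at hi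
    exact absurd ⟨-k, by simp [eq_inv_of_mul_eq_one_left hi]⟩ hsmem

theorem semiconjBy_inv_of_notMem_zpowers (h : ∀ g ∉ zpowers c, g ^ 2 = 1) (hs : s ∉ zpowers c) :
    SemiconjBy s c c⁻¹ := by
  -- `s * c` is an involution as well, so `c⁻¹ * s = (s * c)⁻¹ = s * c`.
  have hsc : s * c ∉ zpowers c := by rwa [Subgroup.mul_mem_cancel_right _ (mem_zpowers c)]
  have hinv : s⁻¹ = s := inv_eq_of_mul_eq_one_right (by rw [← sq, h s hs])
  have hinv' : (s * c)⁻¹ = s * c := inv_eq_of_mul_eq_one_right (by rw [← sq, h _ hsc])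
  rw [SemiconjBy, ← hinv', mul_inv_rev, hinv]

theorem mul_mem_zpowers_of_notMem_zpowers (hc : c ^ 2 ≠ 1) (h : ∀ g ∉ zpowers c, g ^ 2 = 1)
    {t : G} (hs : s ∉ zpowers c) (ht : t ∉ zpowers c) : s * t ∈ zpowers c := by
  by_contra hst
  have hfix : SemiconjBy (s * t) c c := by
    simpa using (semiconjBy_inv_of_notMem_zpowers h hs).inv_right.mul_left
      (semiconjBy_inv_of_notMem_zpowers h ht)
  have hself : c = c⁻¹ :=
    mul_right_cancel (hfix.eq.symm.trans (semiconjBy_inv_of_notMem_zpowers h hst).eq)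
  exact hc (by rw [sq, ← eq_inv_iff_mul_eq_one, ← hself])

theorem exists_injective_dihedralGroup (hc : c ^ 2 ≠ 1) (h : ∀ g ∉ zpowers c, g ^ 2 = 1) :
    ∃ f : G →* DihedralGroup (orderOf c), Injective f := by
  by_cases hgen : ∀ g, g ∈ zpowers c
  · let f := monoidHomOfForallMemZpowers hgen DihedralGroup.orderOf_r_one.dvd
    refine ⟨f, (injective_iff_map_eq_one f).2 fun g hg ↦ ?_⟩
    obtain ⟨k, rfl⟩ := hgen g
    rwa [map_zpow, monoidHomOfForallMemZpowers_apply_gen, ← orderOf_dvd_iff_zpow_eq_one,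
      DihedralGroup.orderOf_r_one, orderOf_dvd_iff_zpow_eq_one] at hg
  · obtain ⟨s, hs⟩ := not_forall.1 hgen
    let φ := dihedralHom (h s hs) (semiconjBy_inv_of_notMem_zpowers h hs)
    have hinj : Injective φ := dihedralHom_injective _ _ hs
    have hsurj : Surjective φ := by
      intro g
      by_cases hg : g ∈ zpowers c
      · obtain ⟨k, rfl⟩ := hg
        exact ⟨.r k, dihedralHom_r_intCast _ _ k⟩
      · obtain ⟨k, hk⟩ := mul_mem_zpowers_of_notMem_zpowers hc h hs hg
        refine ⟨.sr k, (dihedralHom_sr_intCast _ _ k).trans ?_⟩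
        change c ^ k = s * g at hk
        rw [hk, ← mul_assoc, ← sq, h s hs, one_mul]
    exact ⟨(MulEquiv.ofBijective φ ⟨hinj, hsurj⟩).symm, MulEquiv.injective _⟩

theorem zpowers_mk_of_coprime {a : G} {b : G'} (h : (orderOf a).Coprime (orderOf b)) :
    zpowers (a, b) = (zpowers a).prod (zpowers b) := by
  refine le_antisymm (zpowers_le.2 ⟨mem_zpowers a, mem_zpowers b⟩) ?_
  rintro ⟨_, _⟩ ⟨⟨i, rfl⟩, ⟨j, rfl⟩⟩
  have hbezout := Nat.gcd_eq_gcd_ab (orderOf a) (orderOf b)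
  rw [h.gcd_eq_one, Nat.cast_one] at hbezout
  set u := (orderOf a).gcdA (orderOf b)
  set v := (orderOf a).gcdB (orderOf b)
  refine ⟨orderOf b * v * i + orderOf a * u * j, Prod.ext ?_ ?_⟩ <;>
    refine zpow_eq_zpow_iff_modEq.2 (Int.modEq_iff_dvd.2 ?_)
  · exact ⟨u * (i - j), by linear_combination i * hbezout⟩
  · exact ⟨v * (j - i), by linear_combination j * hbezout⟩

theorem exists_injective_prod_dihedralGroup (hodd : Odd (orderOf c)) (hc : c ≠ 1)
    (h : ∀ g ∉ zpowers c, g ^ 2 = 1) :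
    ∃ f : G × Multiplicative (ZMod 2) →* DihedralGroup (orderOf c * 2), Injective f := by
  let z : Multiplicative (ZMod 2) := .ofAdd 1
  have hz : orderOf z = 2 := orderOf_eq_prime (by decide) (by decide)
  have hcop : (orderOf c).Coprime (orderOf z) := by rwa [hz, Nat.coprime_two_right]
  have horder : orderOf (c, z) = orderOf c * 2 := by rw [Prod.orderOf_mk, hcop.lcm_eq_mul, hz]
  have hmem (w : Multiplicative (ZMod 2)) : w ∈ zpowers z :=
    mem_zpowers_of_prime_card (p := 2) (by simp) (by decide)
  have hsq : ∀ w : Multiplicative (ZMod 2), w ^ 2 = 1 := by decide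
  rw [← horder]
  refine exists_injective_dihedralGroup (fun hcz ↦ hc ?_) fun ⟨g, w⟩ hg ↦ ?_
  · exact orderOf_eq_one_iff.1 <| (Nat.coprime_two_right.2 hodd).eq_one_of_dvd <|
      orderOf_dvd_of_pow_eq_one (congrArg Prod.fst hcz)
  · rw [zpowers_mk_of_coprime hcop, mem_prod, not_and'] at hg
    exact Prod.ext (h g (hg (hmem w))) (hsq w)

end Dihedral

section PrimeOrders

variable (hG : ∀ g : G, g ≠ 1 → (orderOf g).Prime) {c g : G}
include hG

theorem orderOf_eq_of_commute (h : Commute c g) (hc : c ≠ 1) (hg : g ≠ 1) :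
    orderOf c = orderOf g := by
  by_contra hne
  have hcop := (Nat.coprime_primes (hG c hc) (hG g hg)).2 hne
  have hmul := h.orderOf_mul_eq_mul_orderOf_of_coprime hcop
  have hne_one : c * g ≠ 1 := by
    rw [ne_eq, ← orderOf_eq_one_iff, hmul]
    exact fun h1 ↦ (hG c hc).ne_one (Nat.eq_one_of_mul_eq_one_right h1)
  refine Nat.not_prime_mul (hG c hc).ne_one (hG g hg).ne_one ?_
  exact hmul ▸ hG _ hne_one

theorem orderOf_dvd_totient_of_not_commute [(zpowers c).Normal] (h : ¬ Commute c g) :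
    orderOf g ∣ (orderOf c).totient := by
  have hc : c ≠ 1 := fun hc ↦ h (hc ▸ Commute.one_left g)
  have hg : g ≠ 1 := fun hg ↦ h (hg ▸ Commute.one_right c)
  have : Finite (zpowers c) := finite_zpowers.2 (orderOf_pos_iff.1 (hG c hc).pos)
  let φ : G →* MulAut (zpowers c) := MulAut.conjNormal
  have hφ : φ g ≠ 1 := fun hφ ↦ h <| by
    have hconj : g * c * g⁻¹ = c :=
      congrArg (fun α : MulAut (zpowers c) ↦ (α ⟨c, mem_zpowers c⟩ : G)) hφ
    exact (mul_inv_eq_iff_eq_mul.1 hconj).symm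
  have horder : orderOf (φ g) = orderOf g :=
    ((Nat.dvd_prime (hG g hg)).1 (orderOf_map_dvd φ g)).resolve_left (orderOf_eq_one_iff.not.2 hφ)
  rw [← horder, ← Nat.card_zpowers c, ← IsCyclic.card_mulAut]
  exact orderOf_dvd_natCard (φ g)

theorem mem_zpowers_of_commute (hc : c ≠ 1) (hcard : ¬ orderOf c ^ 2 ∣ Nat.card G)
    (h : Commute c g) : g ∈ zpowers c := by
  have : Finite G := Nat.finite_of_card_ne_zero fun h0 ↦ hcard (h0 ▸ dvd_zero _)
  have : Fact (orderOf c).Prime := ⟨hG c hc⟩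
  have hpgroup : IsPGroup (orderOf c) (centralizer {c}) := by
    refine fun x ↦ ⟨1, Subtype.ext ?_⟩
    rcases eq_or_ne (x : G) 1 with hx | hx
    · simp [hx]
    · have hcx : Commute c x := (mem_centralizer_singleton_iff.1 x.2).symm
      simp [orderOf_eq_of_commute hG hcx hc hx, pow_orderOf_eq_one]
  obtain ⟨k, hk⟩ := hpgroup.exists_card_eq
  have hk1 : k ≤ 1 := by
    by_contra! hk2
    exact hcard <| (pow_dvd_pow _ hk2).trans (hk ▸ card_subgroup_dvd_card _)
  have hle : zpowers c ≤ centralizer {c} := by simp [mem_centralizer_singleton_iff]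
  have heq : zpowers c = centralizer {c} := by
    refine eq_of_le_of_card_ge hle ?_
    rw [hk, Nat.card_zpowers]
    exact (Nat.pow_le_pow_right (hG c hc).pos hk1).trans_eq (pow_one _)
  rw [heq]
  exact mem_centralizer_singleton_iff.2 h.eq.symm

theorem sq_eq_one_of_notMem_zpowers [(zpowers c).Normal] (hc : c ≠ 1)
    (hcard : ¬ orderOf c ^ 2 ∣ Nat.card G) {k : ℕ} (hk : (orderOf c).totient = 2 ^ k)
    (hg : g ∉ zpowers c) : g ^ 2 = 1 := by
  have hg1 : g ≠ 1 := fun h ↦ hg (h ▸ one_mem _)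
  have hdvd : orderOf g ∣ 2 ^ k :=
    hk ▸ orderOf_dvd_totient_of_not_commute hG (mt (mem_zpowers_of_commute hG hc hcard) hg)
  have horder : orderOf g = 2 := (Nat.prime_dvd_prime_iff_eq (hG g hg1) Nat.prime_two).1
    ((hG g hg1).dvd_of_dvd_pow hdvd)
  exact horder ▸ pow_orderOf_eq_one g

theorem sq_eq_one_of_orderOf_eq_two [(zpowers c).Normal] (hc : orderOf c = 2) (g : G) :
    g ^ 2 = 1 := by
  rcases eq_or_ne g 1 with rfl | hg
  · exact one_pow 2
  have hcomm : Commute c g := by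
    by_contra h
    have hdvd := orderOf_dvd_totient_of_not_commute hG h
    rw [hc, Nat.totient_two, Nat.dvd_one] at hdvd
    exact (hG g hg).ne_one hdvd
  have hc1 : c ≠ 1 := by
    rintro rfl
    simp at hc
  rw [← hc, orderOf_eq_of_commute hG hcomm hc1 hg, pow_orderOf_eq_one]

end PrimeOrders

section ElementaryAbelian

theorem exists_injective_pi_zmod {A : Type*} [CommGroup A] {p n : ℕ} [Fact p.Prime]
    (h : ∀ a : A, a ^ p = 1) (hcard : ¬ p ^ (n + 1) ∣ Nat.card A) :
    ∃ f : A →* (Fin n → Multiplicative (ZMod p)), Injective f := by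
  have : Finite A := Nat.finite_of_card_ne_zero fun h0 ↦ hcard (h0 ▸ dvd_zero _)
  let : Module (ZMod p) (Additive A) := AddCommGroup.zmodModule (n := p) fun a ↦ h a.toMul
  have hpow : Nat.card A = p ^ Module.finrank (ZMod p) (Additive A) :=
    (Module.natCard_eq_pow_finrank (K := ZMod p) (V := Additive A)).trans (by rw [Nat.card_zmod])
  have hrank : Module.finrank (ZMod p) (Additive A) ≤ Module.finrank (ZMod p) (Fin n → ZMod p) := by
    rw [Module.finrank_fin_fun]
    by_contra! hlt
    exact hcard (hpow ▸ pow_dvd_pow p hlt)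
  obtain ⟨f, hf⟩ := finrank_le_iff_exists_linearMap.1 hrank
  let e := MulEquiv.piMultiplicative fun _ : Fin n ↦ ZMod p
  exact ⟨e.toMonoidHom.comp (AddMonoidHom.toMultiplicativeRight f.toAddMonoidHom),
    e.injective.comp hf⟩

theorem exists_injective_pi_zmod_two {n : ℕ} (h : ∀ g : G, g ^ 2 = 1)
    (hcard : ¬ 2 ^ (n + 1) ∣ Nat.card G) :
    ∃ f : G →* (Fin n → Multiplicative (ZMod 2)), Injective f :=
  have hcomm := Commute.of_orderOf_dvd_two fun g ↦ orderOf_dvd_of_pow_eq_one (h g)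
  let _ : CommGroup G := { ‹Group G› with mul_comm := fun a b ↦ (hcomm a b).eq }
  exists_injective_pi_zmod h hcard

end ElementaryAbelian

section AlternatingGroupFive

open Equiv.Perm

theorem pow_eq_one_of_sign_eq_one :
    ∀ g : Equiv.Perm (Fin 5), sign g = 1 → g ^ 2 = 1 ∨ g ^ 3 = 1 ∨ g ^ 5 = 1 := by
  decide +kernel

theorem orderOf_eq_two_or_three_or_five {g : alternatingGroup (Fin 5)} (hg : g ≠ 1) :
    orderOf g = 2 ∨ orderOf g = 3 ∨ orderOf g = 5 := by
  have horder (p : ℕ) [Fact p.Prime] (h : (g : Equiv.Perm (Fin 5)) ^ p = 1) : orderOf g = p :=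
    orderOf_eq_prime (Subtype.ext h) hg
  have : Fact (Nat.Prime 5) := ⟨Nat.prime_five⟩
  exact (pow_eq_one_of_sign_eq_one g (mem_alternatingGroup.1 g.2)).imp (horder 2)
    (Or.imp (horder 3) (horder 5))

variable (K : Subgroup (alternatingGroup (Fin 5)))

theorem natCard_dvd_sixty : Nat.card K ∣ 60 := by
  have hcard : Nat.card (alternatingGroup (Fin 5)) = 60 := by
    rw [nat_card_alternatingGroup, Nat.card_fin]
    rfl
  exact hcard ▸ K.card_subgroup_dvd_card

variable {K}

theorem orderOf_eq_two_or_three_or_five_of_subgroup {g : K} (hg : g ≠ 1) :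
    orderOf g = 2 ∨ orderOf g = 3 ∨ orderOf g = 5 := by
  rw [← orderOf_coe]
  exact orderOf_eq_two_or_three_or_five (by simpa using hg)

theorem prime_orderOf_of_ne_one (g : K) (hg : g ≠ 1) : (orderOf g).Prime := by
  rcases orderOf_eq_two_or_three_or_five_of_subgroup hg with h | h | h <;> rw [h] <;> norm_num

theorem exists_injective_prod_pi_zmod_two (hK : ∀ g : K, g ^ 2 = 1) :
    ∃ f : K × Multiplicative (ZMod 2) →* (Fin 3 → Multiplicative (ZMod 2)), Injective f := by
  have hsq : ∀ w : Multiplicative (ZMod 2), w ^ 2 = 1 := by decide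
  refine exists_injective_pi_zmod_two (fun g ↦ Prod.ext (hK g.1) (hsq g.2)) fun hdvd ↦ ?_
  have hdvd' : 2 ^ 3 * 2 ∣ Nat.card K * 2 := by simpa [Nat.card_prod] using hdvd
  have := (Nat.dvd_of_mul_dvd_mul_right two_pos hdvd').trans (natCard_dvd_sixty K)
  omega

theorem exists_injective_prod_dihedralGroup_of_normal_zpowers {c : K} [(zpowers c).Normal]
    {p k : ℕ} (hc : orderOf c = p) (hodd : Odd p) (hp1 : p ≠ 1) (hp60 : ¬ p ^ 2 ∣ 60)
    (hk : p.totient = 2 ^ k) :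
    ∃ f : K × Multiplicative (ZMod 2) →* DihedralGroup (p * 2), Injective f := by
  subst hc
  have hc : c ≠ 1 := orderOf_eq_one_iff.not.1 hp1
  have hcard : ¬ orderOf c ^ 2 ∣ Nat.card K := fun h ↦ hp60 (h.trans (natCard_dvd_sixty K))
  exact exists_injective_prod_dihedralGroup hodd hc fun g hg ↦
    sq_eq_one_of_notMem_zpowers prime_orderOf_of_ne_one hc hcard hk hg

end AlternatingGroupFive

theorem exists_injective_map_fst_prod (H : Subgroup (G × G')) :
    ∃ ι : H →* H.map (MonoidHom.fst G G') × G', Injective ι :=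
  ⟨((MonoidHom.fst G G').subgroupMap H).prod ((MonoidHom.snd G G').comp H.subtype), fun _ _ h ↦
    Subtype.ext (Prod.ext (congrArg (fun z ↦ (z.1 : G)) h) (congrArg (fun z ↦ z.2) h))⟩

/-- Every hyper-elementary subgroup of `A_5 × ℤ/2` is isomorphic to a subgroup
of the elementary abelian group `(ℤ/2)³`, of `D_6`, or of `D_{10}`. -/
theorem hyperelementary_subgroups_of_A5_prod_Z2
    (H : Subgroup (alternatingGroup (Fin 5) × Multiplicative (ZMod 2)))
    (hH : IsHyperElementary H) :
    (∃ f : H →* (Fin 3 → Multiplicative (ZMod 2)), Function.Injective f) ∨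
    (∃ f : H →* DihedralGroup 6, Function.Injective f) ∨
    (∃ f : H →* DihedralGroup 10, Function.Injective f) := by
  let K := H.map (MonoidHom.fst _ _)
  have hK : IsHyperElementary K := hH.of_surjective _ (MonoidHom.subgroupMap_surjective _ H)
  obtain ⟨ι, hι⟩ := exists_injective_map_fst_prod H
  have restrict {L : Type} [Group L] :
      (∃ f : K × Multiplicative (ZMod 2) →* L, Injective f) → ∃ f : H →* L, Injective f :=
    fun ⟨f, hf⟩ ↦ ⟨f.comp ι, hf.comp hι⟩
  rcases subsingleton_or_nontrivial K with _ | _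
  · exact .inl (restrict (exists_injective_prod_pi_zmod_two fun _ ↦ Subsingleton.elim _ _))
  obtain ⟨c, hc, hnormal⟩ := hK.exists_normal_zpowers
  rcases orderOf_eq_two_or_three_or_five_of_subgroup hc with h2 | h3 | h5
  · have hsq := sq_eq_one_of_orderOf_eq_two prime_orderOf_of_ne_one h2
    exact .inl (restrict (exists_injective_prod_pi_zmod_two hsq))
  · exact .inr <| .inl <| restrict <| exists_injective_prod_dihedralGroup_of_normal_zpowers
      (k := 1) h3 (by decide) (by decide) (by decide) (by decide)
  · exact .inr <| .inr <| restrict <| exists_injective_prod_dihedralGroup_of_normal_zpowers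
      (k := 2) h5 (by decide) (by decide) (by decide) (by decide)
end

section
/- For p = 2 and p = 3, the group algebra ℚ_p[D_6 × ℤ/2] over the field of p-adic numbers is isomorphic, as a ring, to the product (ℚ_p)⁸ × (M₂(ℚ_p))⁴ of eight copies of ℚ_p and four copies of the ring of 2 × 2 matrices over ℚ_p. -/
/-!
The key tool is Fourier inversion: if a linear form `τ` on an algebra `A` of rank `|G|` restricts,
along a homomorphism `φ : G → A`, to a unit multiple of the indicator function of `1` (as a suitable
combination of the irreducible characters does), then every coefficient of `x ∈ R[G]` can be
recovered from the image of `x` in `A`, and so `R[G] ≅ A`. Since `D₆ ≅ D₃ × ℤ/2`, the group in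
question is `D₃ × (ℤ/2)²`. The four sign characters of `(ℤ/2)²` split its group algebra into four
copies of `R[D₃]`, and each of these is `R² × M₂(R)` by way of the trivial character, the
determinant and the reflection representation.
-/

section TraceForm

variable {R G A : Type*} [Group G] [DecidableEq G]

theorem trace_mul_lift_eq [CommSemiring R] [Semiring A] [Algebra R A] {φ : G →* A}
    {τ : A →ₗ[R] R} {c : R} (hτ : ∀ g, τ (φ g) = if g = 1 then c else 0)
    (g : G) (x : MonoidAlgebra R G) :
    τ (φ g⁻¹ * MonoidAlgebra.lift R A G φ x) = x.coeff g * c := by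
  induction x using MonoidAlgebra.induction_linear with
  | zero => simp
  | add x y hx hy =>
    simp only [map_add, mul_add, hx, hy, MonoidAlgebra.coeff_add, Finsupp.add_apply, add_mul]
  | single h r =>
    have hgh : g⁻¹ * h = 1 ↔ h = g := by rw [inv_mul_eq_one, eq_comm]
    simp only [MonoidAlgebra.lift_single, mul_smul_comm, ← map_mul, map_smul, hτ, hgh,
      MonoidAlgebra.coeff_single, Finsupp.single_apply, smul_eq_mul, ite_mul, mul_ite, zero_mul,
      mul_zero]

variable [CommRing R] [Nontrivial R] [Finite G] [Ring A] [Algebra R A] [Module.Free R A]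
  [Module.Finite R A] {φ : G →* A} {τ : A →ₗ[R] R} {c : R}

theorem bijective_lift_of_trace (hτ : ∀ g, τ (φ g) = if g = 1 then c else 0) (hc : IsUnit c)
    (hrank : Module.finrank R A = Nat.card G) :
    Function.Bijective (MonoidAlgebra.lift R A G φ) := by
  cases nonempty_fintype G
  let coeffs : A →ₗ[R] (G → R) := LinearMap.pi fun g ↦ τ ∘ₗ LinearMap.mulLeft R (φ g⁻¹)
  have coeffs_comp_lift : coeffs ∘ MonoidAlgebra.lift R A G φ =
      (fun f ↦ hc.unit • f) ∘ (MonoidAlgebra.coeffLinearEquiv R ≪≫ₗ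
        Finsupp.linearEquivFunOnFinite R R G) := by
    ext x g
    simp [coeffs, trace_mul_lift_eq hτ, Units.smul_def, mul_comm]
  have hcomp : Function.Bijective (coeffs ∘ MonoidAlgebra.lift R A G φ) := by
    rw [coeffs_comp_lift]
    exact (MulAction.bijective hc.unit).comp (LinearEquiv.bijective _)
  have hsurj : Function.Surjective coeffs := hcomp.surjective.of_comp
  -- A surjection onto a finite module from a module of the same free rank is injective.
  have hinj : Function.Injective coeffs :=
    let e : A ≃ₗ[R] (G → R) := LinearEquiv.ofFinrankEq _ _ (by simp [hrank])
    OrzechProperty.injective_of_surjective_of_injective e.toLinearMap coeffs e.injective hsurj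
  exact (Function.Bijective.of_comp_iff' ⟨hinj, hsurj⟩ _).1 hcomp

/-- The isomorphism `R[G] ≃ A` extending a homomorphism `φ : G → A` to an algebra of rank `|G|`,
given a linear form `τ` on `A` that plays the role of the character of the regular representation:
`τ ∘ φ` is `c` at `1` and vanishes elsewhere, with `c` a unit. -/
noncomputable def groupAlgebraEquivOfTrace (hτ : ∀ g, τ (φ g) = if g = 1 then c else 0)
    (hc : IsUnit c) (hrank : Module.finrank R A = Nat.card G) : MonoidAlgebra R G ≃ₐ[R] A :=
  AlgEquiv.ofBijective _ (bijective_lift_of_trace hτ hc hrank)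

end TraceForm

section Characters

variable {R H V W ι κ : Type*}

theorem sum_coprod_eq_ite [CommSemiring R] [Monoid V] [Monoid W] [DecidableEq V] [DecidableEq W]
    [Fintype ι] [Fintype κ] {χ : ι → V →* R} {ψ : κ → W →* R} {c d : R}
    (hχ : ∀ v, ∑ i, χ i v = if v = 1 then c else 0)
    (hψ : ∀ w, ∑ k, ψ k w = if w = 1 then d else 0) (x : V × W) :
    ∑ p : ι × κ, (χ p.1).coprod (ψ p.2) x = if x = 1 then c * d else 0 := by
  simp only [MonoidHom.coprod_apply, Fintype.sum_prod_type, ← Finset.sum_mul_sum, hχ, hψ,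
    ite_zero_mul_ite_zero, Prod.ext_iff, Prod.fst_one, Prod.snd_one]

/-- The homomorphism from `H × V` to a power of `R[H]` whose `i`-th component is the canonical
inclusion of `H`, twisted by the linear character `χ i` of `V`. -/
noncomputable def twistHom [Semiring R] [Monoid H] [Monoid V] (χ : ι → V →* R) :
    H × V →* (ι → MonoidAlgebra R H) where
  toFun g i := MonoidAlgebra.single g.1 (χ i g.2)
  map_one' := by ext1; simp [MonoidAlgebra.one_def]
  map_mul' g g' := by ext1; simp [MonoidAlgebra.single_mul_single]

theorem sum_coeff_one_twistHom [Semiring R] [Monoid H] [Monoid V] [DecidableEq H] [DecidableEq V]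
    [Fintype ι] {χ : ι → V →* R} {c : R} (hχ : ∀ v, ∑ i, χ i v = if v = 1 then c else 0)
    (g : H × V) : ∑ i, (twistHom χ g i).coeff 1 = if g = 1 then c else 0 := by
  by_cases hg : g.1 = 1 <;> simp [twistHom, hg, hχ, Prod.ext_iff]

/-- A family `χ` of `|V|` linear characters of `V` satisfying column orthogonality splits
`R[H × V]` into copies of `R[H]` indexed by the family. -/
noncomputable def groupAlgebraProdEquivPi [CommRing R] [Nontrivial R] [Group H] [Group V]
    [Finite H] [Finite V] [DecidableEq V] [Fintype ι] {χ : ι → V →* R} {c : R}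
    (hχ : ∀ v, ∑ i, χ i v = if v = 1 then c else 0) (hc : IsUnit c)
    (hcard : Fintype.card ι = Nat.card V) :
    MonoidAlgebra R (H × V) ≃ₐ[R] (ι → MonoidAlgebra R H) :=
  letI := Classical.decEq H
  letI := Fintype.ofFinite H
  have : Module.Free R (MonoidAlgebra R H) := .of_equiv (MonoidAlgebra.coeffLinearEquiv R).symm
  have : Module.Finite R (MonoidAlgebra R H) := .equiv (MonoidAlgebra.coeffLinearEquiv R).symm
  groupAlgebraEquivOfTrace (φ := twistHom χ)
    (τ := ∑ i, Finsupp.lapply 1 ∘ₗ (MonoidAlgebra.coeffLinearEquiv R).toLinearMap ∘ₗ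
      LinearMap.proj i)
    (fun g ↦ by simpa using sum_coeff_one_twistHom hχ g) hc
    (by simp [Module.finrank_pi_fintype, (MonoidAlgebra.coeffLinearEquiv R).finrank_eq, hcard,
      mul_comm])

/-- The linear character `z ↦ u ^ z` of `ℤ/2`; the sign `u` parametrises the two such characters. -/
def signChar (R : Type*) [Ring R] (u : ℤˣ) : Multiplicative (ZMod 2) →* R where
  toFun z := ((u ^ z.toAdd : ℤˣ) : ℤ)
  map_one' := by simp
  map_mul' z w := by simp [uzpow_add]

theorem sum_signChar [Ring R] (z : Multiplicative (ZMod 2)) :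
    ∑ u, signChar R u z = if z = 1 then 2 else 0 := by
  have sum_int : ∑ u : ℤˣ, ((u ^ z.toAdd : ℤˣ) : ℤ) = if z = 1 then 2 else 0 := by
    decide +revert
  simpa [signChar, apply_ite] using congrArg (Int.cast : ℤ → R) sum_int

end Characters

section Dihedral

variable {M : Type*} [Monoid M] {n : ℕ} {a s : M}

/-- The decomposition `D_{2n} ≃ D_n × ℤ/2` for odd `n`, coming from the Chinese remainder theorem
on the indices of rotations and reflections. -/
def dihedralTwoMulEquiv (hn : Odd n) :
    DihedralGroup (2 * n) ≃* DihedralGroup n × Multiplicative (ZMod 2) :=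
  let e := ZMod.chineseRemainder (Nat.coprime_two_left.2 hn)
  { toFun
      | .r i => (.r (e i).2, .ofAdd (e i).1)
      | .sr i => (.sr (e i).2, .ofAdd (e i).1)
    invFun
      | (.r i, z) => .r (e.symm (z.toAdd, i))
      | (.sr i, z) => .sr (e.symm (z.toAdd, i))
    left_inv := by rintro (i | i) <;> simp
    right_inv := by rintro ⟨i | i, z⟩ <;> simp
    map_mul' := by
      rintro (i | i) (j | j) <;> simp [← ofAdd_add, CharTwo.sub_eq_add, add_comm] }

theorem pow_mul_mul_pow_eq (has : a * s * a = s) (k : ℕ) : a ^ k * s * a ^ k = s := by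
  induction k with
  | zero => simp
  | succ k ih =>
    calc a ^ (k + 1) * s * a ^ (k + 1) = a ^ k * (a * s * a) * a ^ k := by
          simp only [pow_succ a k, mul_assoc, ← pow_succ' a k]
      _ = s := by rw [has, ih]

variable [NeZero n]

theorem pow_val_add (ha : a ^ n = 1) (i j : ZMod n) :
    a ^ (i + j).val = a ^ i.val * a ^ j.val := by
  rw [ZMod.val_add, ← pow_eq_pow_mod _ ha, pow_add]

theorem pow_val_mul_mul_pow_val (ha : a ^ n = 1) (has : a * s * a = s) (i j : ZMod n) :
    a ^ i.val * (s * a ^ j.val) = s * a ^ (j - i).val := by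
  rw [← add_sub_cancel i j, pow_val_add ha, add_sub_cancel_left, ← mul_assoc, ← mul_assoc,
    pow_mul_mul_pow_eq has]

/-- The homomorphism from `D_n` given by elements `a` and `s` satisfying its defining relations.
The relation `s a s = a⁻¹` is written without inverses, so that the target can be any monoid. -/
def dihedralLift (a s : M) (ha : a ^ n = 1) (hs : s * s = 1) (has : a * s * a = s) :
    DihedralGroup n →* M where
  toFun
    | .r i => a ^ i.val
    | .sr i => s * a ^ i.val
  map_one' := by simp [DihedralGroup.one_def, -DihedralGroup.r_zero]
  map_mul' := by
    rintro (i | i) (j | j)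
    · exact pow_val_add ha i j
    · exact (pow_val_mul_mul_pow_val ha has i j).symm
    · simp [pow_val_add ha, mul_assoc]
    · simp [mul_assoc, pow_val_mul_mul_pow_val ha has, ← mul_assoc s s, hs]

end Dihedral

section DihedralThree

variable (R : Type*) [CommRing R]

/-- The matrix of order three by which a rotation of `D₃` acts on the root lattice `A₂`. -/
def triangleRotation : Matrix (Fin 2) (Fin 2) R := !![0, -1; 1, -1]

/-- The matrix by which a reflection of `D₃` acts on the root lattice `A₂`. -/
def triangleReflection : Matrix (Fin 2) (Fin 2) R := !![0, 1; 1, 0]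

theorem triangleRotation_pow_three : triangleRotation R ^ 3 = 1 := by
  simp [triangleRotation, pow_succ, Matrix.one_fin_two]

theorem triangleReflection_mul_self : triangleReflection R * triangleReflection R = 1 := by
  simp [triangleReflection, Matrix.one_fin_two]

theorem triangleRotation_mul_triangleReflection_mul_triangleRotation :
    triangleRotation R * triangleReflection R * triangleRotation R = triangleReflection R := by
  simp [triangleRotation, triangleReflection]

theorem trace_triangleRotation_pow_val (i : ZMod 3) :
    (triangleRotation R ^ i.val).trace = if i = 0 then 2 else -1 := by
  have cases_three : i = 0 ∨ i = 1 ∨ i = 2 := by decide +revert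
  rcases cases_three with rfl | rfl | rfl
  · simp
  · simp [triangleRotation, show (1 : ZMod 3).val = 1 from rfl]
  · simp [triangleRotation, show (2 : ZMod 3).val = 2 from rfl, show (2 : ZMod 3) ≠ 0 by decide,
      pow_two]

theorem trace_triangleReflection_mul_triangleRotation_pow_val (i : ZMod 3) :
    (triangleReflection R * triangleRotation R ^ i.val).trace = 0 := by
  fin_cases i <;>
    simp [triangleReflection, triangleRotation, ZMod.val, pow_succ, Matrix.one_fin_two]

/-- The product of the irreducible representations of `D₃`: the linear characters, indexed by the
value `u = ±1` on reflections, and the two-dimensional reflection representation. -/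
def dihedralThreeRep : DihedralGroup 3 →* (ℤˣ → R) × Matrix (Fin 2) (Fin 2) R :=
  dihedralLift (1, triangleRotation R) (fun u ↦ ((u : ℤ) : R), triangleReflection R)
    (by simp [triangleRotation_pow_three])
    (by ext1
        · ext1 u; simp [← Int.cast_mul, ← Units.val_mul]
        · exact triangleReflection_mul_self R)
    (by simp [triangleRotation_mul_triangleReflection_mul_triangleRotation])

/-- The sum of the traces of the irreducible representations of `D₃`, weighted by their degrees. -/
def dihedralThreeTrace : (ℤˣ → R) × Matrix (Fin 2) (Fin 2) R →ₗ[R] R :=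
  (∑ u, LinearMap.proj u) ∘ₗ LinearMap.fst R _ _ +
    2 • Matrix.traceLinearMap (Fin 2) R R ∘ₗ LinearMap.snd R _ _

theorem dihedralThreeTrace_rep_r (i : ZMod 3) :
    dihedralThreeTrace R (dihedralThreeRep R (.r i)) =
      2 + 2 * (triangleRotation R ^ i.val).trace := by
  simp [dihedralThreeTrace, dihedralThreeRep, dihedralLift, one_add_one_eq_two]

theorem dihedralThreeTrace_rep_sr (i : ZMod 3) :
    dihedralThreeTrace R (dihedralThreeRep R (.sr i)) =
      2 * (triangleReflection R * triangleRotation R ^ i.val).trace := by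
  simp [dihedralThreeTrace, dihedralThreeRep, dihedralLift]

theorem dihedralThreeTrace_rep (g : DihedralGroup 3) :
    dihedralThreeTrace R (dihedralThreeRep R g) = if g = 1 then 6 else 0 := by
  rcases g with i | i
  · have hi : DihedralGroup.r i = 1 ↔ i = 0 := by rw [← DihedralGroup.r_zero, DihedralGroup.r.injEq]
    rw [dihedralThreeTrace_rep_r, trace_triangleRotation_pow_val]
    by_cases h : i = 0 <;> norm_num [hi, h]
  · rw [dihedralThreeTrace_rep_sr, trace_triangleReflection_mul_triangleRotation_pow_val,
      mul_zero, if_neg (by simp [DihedralGroup.one_def, -DihedralGroup.r_zero])]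

variable {R}

/-- The isomorphism `R[D₃] ≃ R² × M₂(R)` for `6` invertible in `R`. -/
noncomputable def groupAlgebraDihedralThreeEquiv [Nontrivial R] (h6 : IsUnit (6 : R)) :
    MonoidAlgebra R (DihedralGroup 3) ≃ₐ[R] (ℤˣ → R) × Matrix (Fin 2) (Fin 2) R :=
  groupAlgebraEquivOfTrace (dihedralThreeTrace_rep R) h6
    (by rw [DihedralGroup.nat_card]; simp [Module.finrank_matrix])

end DihedralThree

/-- The isomorphism `∏ᵢ (∏ₖ B × C) ≃ ∏₍ᵢ,ₖ₎ B × ∏ᵢ C` regrouping the factors. -/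
def piProdArrowEquiv (R ι κ B C : Type*) [CommSemiring R] [Semiring B] [Algebra R B]
    [Semiring C] [Algebra R C] : (ι → (κ → B) × C) ≃ₐ[R] (ι × κ → B) × (ι → C) where
  toFun f := (fun p ↦ (f p.1).1 p.2, fun i ↦ (f i).2)
  invFun f i := (fun k ↦ f.1 (i, k), f.2 i)
  map_mul' _ _ := rfl
  map_add' _ _ := rfl
  commutes' _ := rfl

theorem padic_group_algebra_D6_prod_Z2_general {R : Type*} [CommRing R] [Nontrivial R]
    (h6 : IsUnit (6 : R)) :
    Nonempty (MonoidAlgebra R (DihedralGroup 6 × Multiplicative (ZMod 2)) ≃ₐ[R]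
      (Fin 8 → R) × (Fin 4 → Matrix (Fin 2) (Fin 2) R)) := by
  have h2 : IsUnit (2 : R) := isUnit_of_dvd_unit ⟨3, by norm_num⟩ h6
  let eGroup := ((dihedralTwoMulEquiv (n := 3) (by decide)).prodCongr
    (MulEquiv.refl (Multiplicative (ZMod 2)))).trans MulEquiv.prodAssoc
  have orthogonality := sum_coprod_eq_ite (sum_signChar (R := R)) (sum_signChar (R := R))
  let eTwist := groupAlgebraProdEquivPi (H := DihedralGroup 3) orthogonality (h2.mul h2) (by simp)
  let eFactors := AlgEquiv.piCongrRight (R := R)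
    fun _ : ℤˣ × ℤˣ ↦ groupAlgebraDihedralThreeEquiv h6
  let e8 : (ℤˣ × ℤˣ) × ℤˣ ≃ Fin 8 := Fintype.equivFinOfCardEq (by simp)
  let e4 : ℤˣ × ℤˣ ≃ Fin 4 := Fintype.equivFinOfCardEq (by simp)
  exact ⟨(MonoidAlgebra.domCongr R R eGroup).trans <| eTwist.trans <| eFactors.trans <|
    (piProdArrowEquiv R _ _ _ _).trans <|
      .prodCongr (.piCongrLeft R (fun _ ↦ R) e8) (.piCongrLeft R (fun _ ↦ _) e4)⟩

/-- For `p = 2` and `p = 3`, `ℚ_p[D_6 × ℤ/2] ≅ (ℚ_p)⁸ × (M₂(ℚ_p))⁴` as rings. -/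
theorem padic_group_algebra_D6_prod_Z2 :
    Nonempty
      (MonoidAlgebra ℚ_[2] (DihedralGroup 6 × Multiplicative (ZMod 2)) ≃+*
        (Fin 8 → ℚ_[2]) × (Fin 4 → Matrix (Fin 2) (Fin 2) ℚ_[2])) ∧
    Nonempty
      (MonoidAlgebra ℚ_[3] (DihedralGroup 6 × Multiplicative (ZMod 2)) ≃+*
        (Fin 8 → ℚ_[3]) × (Fin 4 → Matrix (Fin 2) (Fin 2) ℚ_[3])) :=
  ⟨(padic_group_algebra_D6_prod_Z2_general (by simp)).map AlgEquiv.toRingEquiv,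
    (padic_group_algebra_D6_prod_Z2_general (by simp)).map AlgEquiv.toRingEquiv⟩
end

section
/- The quotient of the group algebra 𝔽₅[D_5] of the dihedral group of order 10 over the field with five elements by its Jacobson radical is isomorphic, as a ring, to 𝔽₅ × 𝔽₅. (This is the algebraic content behind the identification K₀(ẑ₅[D_5]) ≅ K₀(𝔽₅[ℤ/2]) = K₀(𝔽₅ × 𝔽₅) ≅ ℤ².) -/
/-!
The signature `DihedralGroup n →* ℤˣ` has kernel the cyclic group of rotations, generated by `r 1`.
On group algebras it induces a surjection `K[DihedralGroup n] → K[ℤˣ]` whose kernel is the left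
ideal generated by `r 1 - 1`. Being a kernel, this left ideal is two-sided, so every element of it
is nilpotent as soon as `r 1 - 1` is; and when `n = p ^ m` with `p` the characteristic,
`(r 1 - 1) ^ p ^ m = (r 1) ^ p ^ m - 1 = 0`. Hence the kernel lies in the Jacobson radical. As `2`
is invertible, the two characters of `ℤˣ` identify `K[ℤˣ]` with `K × K`, whose Jacobson radical is
zero, so the radical is exactly the kernel.
-/

open MonoidAlgebra

section Jacobson

theorem mem_ring_jacobson_of_forall_isNilpotent_mul {R : Type*} [Ring R] {x : R}
    (hx : ∀ y, IsNilpotent (y * x)) : x ∈ Ring.jacobson R := by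
  rw [← Ideal.jacobson_bot, Ideal.mem_jacobson_iff]
  intro y
  obtain ⟨z, hz⟩ := (hx y).isUnit_add_one.exists_left_inv
  exact ⟨z, by rw [Ideal.mem_bot, ← hz]; noncomm_ring⟩

theorem ring_jacobson_prod_eq_bot {R S : Type*} [Ring R] [Ring S]
    (hR : Ring.jacobson R = ⊥) (hS : Ring.jacobson S = ⊥) : Ring.jacobson (R × S) = ⊥ := by
  have : RingHomSurjective (RingHom.fst R S) := ⟨Prod.fst_surjective⟩
  have : RingHomSurjective (RingHom.snd R S) := ⟨Prod.snd_surjective⟩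
  refine eq_bot_iff.mpr fun x hx ↦ Prod.ext ?_ ?_
  · simpa [hR] using Ring.le_comap_jacobson (RingHom.fst R S) hx
  · simpa [hS] using Ring.le_comap_jacobson (RingHom.snd R S) hx

variable {R S : Type*} [Ring R] [Ring S] {f : R →+* S}

theorem ring_jacobson_eq_ker (hf : Function.Surjective f) (hS : Ring.jacobson S = ⊥)
    (hker : ∀ x ∈ RingHom.ker f, IsNilpotent x) : Ring.jacobson R = RingHom.ker f := by
  have : RingHomSurjective f := ⟨hf⟩
  refine le_antisymm (fun x hx ↦ ?_) fun x hx ↦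
    mem_ring_jacobson_of_forall_isNilpotent_mul fun y ↦ hker _ (Ideal.mul_mem_left _ y hx)
  simpa [hS] using Ring.le_comap_jacobson f hx

theorem nonempty_quotient_jacobson_ringEquiv (hf : Function.Surjective f)
    (hS : Ring.jacobson S = ⊥) (hker : ∀ x ∈ RingHom.ker f, IsNilpotent x) :
    Nonempty ((TwoSidedIdeal.jacobson (⊥ : TwoSidedIdeal R)).ringCon.Quotient ≃+* S) := by
  have hJ : TwoSidedIdeal.jacobson (⊥ : TwoSidedIdeal R) = TwoSidedIdeal.ker f := by
    ext x
    rw [← TwoSidedIdeal.mem_asIdeal, TwoSidedIdeal.asIdeal_jacobson, TwoSidedIdeal.bot_asIdeal,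
      Ideal.jacobson_bot, ring_jacobson_eq_ker hf hS hker, RingHom.mem_ker, TwoSidedIdeal.mem_ker]
  rw [hJ]
  exact ⟨RingCon.quotientKerEquivOfSurjective f hf⟩

end Jacobson

theorem isNilpotent_mul_left_of_forall_exists_mul_eq {M : Type*} [MonoidWithZero M] {u : M}
    (hu : IsNilpotent u) (hnormal : ∀ a, ∃ b, u * a = b * u) (a : M) : IsNilpotent (a * u) := by
  have hpow (n : ℕ) : ∃ b, (a * u) ^ n = b * u ^ n := by
    induction n with
    | zero => exact ⟨1, by simp⟩
    | succ n ih =>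
      obtain ⟨b, hb⟩ := ih
      obtain ⟨c, hc⟩ := hnormal b
      exact ⟨a * c, by rw [pow_succ', hb, mul_assoc, ← mul_assoc u, hc, pow_succ', mul_assoc,
        mul_assoc]⟩
  obtain ⟨n, hn⟩ := hu
  obtain ⟨b, hb⟩ := hpow n
  exact ⟨n, by rw [hb, hn, mul_zero]⟩

section GroupAlgebra

theorem monoidAlgebra_mapDomain_surjective {K M N : Type*} [Semiring K] {f : M → N}
    (hf : Function.Surjective f) :
    Function.Surjective (mapDomain f : MonoidAlgebra K M → MonoidAlgebra K N) := by
  intro y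
  obtain ⟨x, hx⟩ := Finsupp.mapDomain_surjective hf y.coeff
  exact ⟨.ofCoeff x, coeff_injective hx⟩

variable {K G H : Type*} [Ring K] [Group G] [Monoid H]

theorem of_sub_one_mem_span_of_mem_closure {s : Set G} {g : G} (hg : g ∈ Subgroup.closure s) :
    of K G g - 1 ∈ Ideal.span ((fun h ↦ of K G h - 1) '' s) := by
  induction hg using Subgroup.closure_induction with
  | mem g hg => exact Ideal.subset_span (Set.mem_image_of_mem _ hg)
  | one => simp [one_def]
  | mul g h _ _ hg hh =>
    have hmul : of K G (g * h) - 1 = of K G g * (of K G h - 1) + (of K G g - 1) := by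
      rw [map_mul]; noncomm_ring
    exact hmul ▸ add_mem (Ideal.mul_mem_left _ _ hh) hg
  | inv g _ hg =>
    have hinv : of K G g⁻¹ - 1 = -of K G g⁻¹ * (of K G g - 1) := by
      rw [mul_sub, neg_mul, ← map_mul, inv_mul_cancel, map_one]; noncomm_ring
    exact hinv ▸ Ideal.mul_mem_left _ _ hg

-- With `σ` a set-theoretic section of `φ`, every `x` is congruent to `σ (φ x)` modulo the ideal.
theorem ker_mapDomainRingHom_eq_span {φ : G →* H} {s : Set G} (hφ : φ.ker = Subgroup.closure s) :
    RingHom.ker (mapDomainRingHom K φ) = Ideal.span ((fun h ↦ of K G h - 1) '' s) := by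
  set I := Ideal.span ((fun h ↦ of K G h - 1) '' s)
  let σ : H → G := Function.invFun φ
  have hσ (g : G) : φ (σ (φ g)) = φ g := Function.invFun_eq ⟨g, rfl⟩
  have hcongr (x : MonoidAlgebra K G) : x - mapDomain σ (mapDomain φ x) ∈ I := by
    induction x using MonoidAlgebra.induction_linear with
    | zero => simp
    | add x y hx hy => simpa only [mapDomain_add, add_sub_add_comm] using add_mem hx hy
    | single g k =>
      have hg : (σ (φ g))⁻¹ * g ∈ Subgroup.closure s := hφ ▸ φ.eq_iff.mp (hσ g).symm
      have hsingle : single g k - single (σ (φ g)) k =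
          single (σ (φ g)) k * (of K G ((σ (φ g))⁻¹ * g) - 1) := by
        simp [mul_sub, single_mul_single]
      simpa only [mapDomain_single, hsingle] using
        Ideal.mul_mem_left I _ (of_sub_one_mem_span_of_mem_closure hg)
  refine le_antisymm (fun x hx ↦ ?_) (Ideal.span_le.mpr ?_)
  · have hx : mapDomain φ x = 0 := hx
    simpa [hx] using hcongr x
  · rintro _ ⟨g, hg, rfl⟩
    have hg : φ g = 1 := MonoidHom.mem_ker.mp (hφ ▸ Subgroup.subset_closure hg)
    change mapDomainRingHom K φ (of K G g - 1) = 0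
    rw [map_sub, map_one, of_apply, mapDomainRingHom_apply, mapDomain_single, hg, one_def, sub_self]

theorem isNilpotent_of_sub_one {M : Type*} [Monoid M] (p : ℕ) [ExpChar K p] {a : M} {m : ℕ}
    (ha : a ^ p ^ m = 1) : IsNilpotent (of K M a - 1) := by
  have : ExpChar (MonoidAlgebra K M) p :=
    expChar_of_injective_ringHom (f := singleOneRingHom) single_right_injective p
  refine ⟨p ^ m, ?_⟩
  rw [sub_pow_expChar_pow_of_commute p m (Commute.one_right _), ← map_pow, ha, map_one, one_pow,
    sub_self]

theorem isNilpotent_of_mem_ker_mapDomainRingHom (p : ℕ) [ExpChar K p] {φ : G →* H} {a : G} {m : ℕ}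
    (hφ : φ.ker = Subgroup.zpowers a) (ha : a ^ p ^ m = 1) {x : MonoidAlgebra K G}
    (hx : x ∈ RingHom.ker (mapDomainRingHom K φ)) : IsNilpotent x := by
  have hker : RingHom.ker (mapDomainRingHom K φ) = Ideal.span {of K G a - 1} := by
    rw [ker_mapDomainRingHom_eq_span (hφ.trans (Subgroup.zpowers_eq_closure a)),
      Set.image_singleton]
  have hnormal (y : MonoidAlgebra K G) : ∃ z, (of K G a - 1) * y = z * (of K G a - 1) := by
    have hy : (of K G a - 1) * y ∈ RingHom.ker (mapDomainRingHom K φ) :=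
      Ideal.mul_mem_right y _ (hker ▸ Ideal.mem_span_singleton_self _)
    obtain ⟨z, hz⟩ := Ideal.mem_span_singleton'.mp (hker ▸ hy)
    exact ⟨z, hz.symm⟩
  obtain ⟨y, rfl⟩ := Ideal.mem_span_singleton'.mp (hker ▸ hx)
  exact isNilpotent_mul_left_of_forall_exists_mul_eq (isNilpotent_of_sub_one p ha) hnormal y

end GroupAlgebra

section UnitsInt

variable (K : Type*) [CommRing K]

/-- The pair of characters of `ℤˣ` with values in `K`, the trivial one and the inclusion of signs,
extended linearly to the group algebra. -/
noncomputable def unitsIntCharacters : MonoidAlgebra K ℤˣ →ₐ[K] K × K :=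
  (lift K K ℤˣ 1).prod (lift K K ℤˣ ((Int.castRingHom K : ℤ →* K).comp (Units.coeHom ℤ)))

variable {K}

theorem unitsIntCharacters_single_add_single (a b : K) :
    unitsIntCharacters K (single 1 a + single (-1) b) = (a + b, a - b) := by
  simp [unitsIntCharacters, sub_eq_add_neg]

theorem exists_eq_single_add_single {R : Type*} [Semiring R] (x : MonoidAlgebra R ℤˣ) :
    ∃ a b, x = single 1 a + single (-1) b := by
  refine ⟨x.coeff 1, x.coeff (-1), ?_⟩
  ext u
  obtain rfl | rfl := Int.units_eq_one_or u <;> simp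

theorem unitsIntCharacters_bijective (h2 : IsUnit (2 : K)) :
    Function.Bijective (unitsIntCharacters K) := by
  obtain ⟨c, hc⟩ := h2.exists_left_inv
  constructor
  · rw [injective_iff_map_eq_zero]
    intro x hx
    obtain ⟨a, b, rfl⟩ := exists_eq_single_add_single x
    rw [unitsIntCharacters_single_add_single, Prod.mk_eq_zero] at hx
    have ha : a = 0 := by linear_combination c * hx.1 + c * hx.2 - a * hc
    have hb : b = 0 := by linear_combination c * hx.1 - c * hx.2 - b * hc
    simp [ha, hb]
  · rintro ⟨s, t⟩
    refine ⟨single 1 (c * (s + t)) + single (-1) (c * (s - t)), ?_⟩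
    rw [unitsIntCharacters_single_add_single]
    ext
    · linear_combination s * hc
    · linear_combination t * hc

end UnitsInt

section DihedralGroup

open DihedralGroup

/-- The signature of the dihedral group: `1` on rotations and `-1` on reflections. -/
def dihedralSign (n : ℕ) : DihedralGroup n →* ℤˣ where
  toFun
    | r _ => 1
    | sr _ => -1
  map_one' := rfl
  map_mul' := by rintro (i | i) (j | j) <;> simp

theorem dihedralSign_surjective (n : ℕ) : Function.Surjective (dihedralSign n) := fun u ↦
  (Int.units_eq_one_or u).elim (fun h ↦ ⟨r 0, h.symm⟩) fun h ↦ ⟨sr 0, h.symm⟩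

theorem ker_dihedralSign (n : ℕ) : (dihedralSign n).ker = Subgroup.zpowers (r 1) := by
  ext (i | i)
  · obtain ⟨k, rfl⟩ := ZMod.intCast_surjective i
    exact iff_of_true rfl ⟨k, r_one_zpow k⟩
  · refine iff_of_false (by decide : (-1 : ℤˣ) ≠ 1) ?_
    rintro ⟨k, hk⟩
    simp at hk

end DihedralGroup

theorem F5_group_algebra_D5_mod_jacobson_general {K : Type*} [CommRing K] (p m : ℕ) [ExpChar K p]
    (h2 : IsUnit (2 : K)) (hK : Ring.jacobson K = ⊥) :
    Nonempty
      ((TwoSidedIdeal.jacobson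
          (⊥ : TwoSidedIdeal (MonoidAlgebra K (DihedralGroup (p ^ m))))).ringCon.Quotient
        ≃+* K × K) := by
  have hχ := unitsIntCharacters_bijective h2
  let f : MonoidAlgebra K (DihedralGroup (p ^ m)) →+* K × K :=
    (unitsIntCharacters K : MonoidAlgebra K ℤˣ →+* K × K).comp
      (mapDomainRingHom K (dihedralSign (p ^ m)))
  have hf : Function.Surjective f :=
    hχ.surjective.comp (monoidAlgebra_mapDomain_surjective (dihedralSign_surjective _))
  refine nonempty_quotient_jacobson_ringEquiv hf (ring_jacobson_prod_eq_bot hK hK) fun x hx ↦ ?_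
  refine isNilpotent_of_mem_ker_mapDomainRingHom p (ker_dihedralSign _)
    DihedralGroup.r_one_pow_n (hχ.injective ?_)
  rw [map_zero]
  exact hx

/-- The quotient of `𝔽₅[D_5]` by its Jacobson radical (the Jacobson radical of
the zero two-sided ideal) is isomorphic, as a ring, to `𝔽₅ × 𝔽₅`. -/
theorem F5_group_algebra_D5_mod_jacobson :
    Nonempty
      ((TwoSidedIdeal.jacobson
          (⊥ : TwoSidedIdeal (MonoidAlgebra (ZMod 5) (DihedralGroup 5)))).ringCon.Quotient
        ≃+* ZMod 5 × ZMod 5) := by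
  have : Fact (Nat.Prime 5) := ⟨Nat.prime_five⟩
  exact F5_group_algebra_D5_mod_jacobson_general 5 1 (ZMod.isUnit_iff_coprime 2 5 |>.mpr rfl)
    (IsSemisimpleRing.jacobson_eq_bot (ZMod 5))
end
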